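/- Let X be drawn uniformly from the nonempty set 𝒢(n,m,d₁,d₂), with d₁ < m. Let a > 0 and let Q be an n×m real matrix, not identically zero, with all entries in [0,a]. Set f_Q(X) = Σ_{u∈[n], v∈[m]} Q_{uv}·X_{uv}, μ = (d₁/m)·Σ_{u,v} Q_{uv}, σ̃² = (d₁/m)·Σ_{u,v} Q_{uv}², c₀ = (1/3)·(1 − d₁/m), and γ₀ = d₁/(m−d₁). Then for all t ≥ 0: ℙ( f_Q(X) − μ ≥ γ₀·μ + t ) ≤ exp( −c₀·(σ̃²/a²)·h(a·t/σ̃²) ) and ℙ( |f_Q(X) − μ| ≥ γ₀·μ + t ) ≤ 2·exp( −c₀·t²/(2·(σ̃² + a·t/3)) ), where h(x) = (1+x)·log(1+x) − x. -/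

import Mathlib

open scoped Classical BigOperators

noncomputable section

/-- The set of biadjacency matrices of `(n,m,d₁,d₂)`-bipartite biregular graphs. -/
def BBG (n m d₁ d₂ : ℕ) : Finset (Fin n → Fin m → Bool) :=
  Finset.univ.filter fun X =>
    (∀ u, (∑ v, if X u v then 1 else 0) = d₁) ∧
    (∀ v, (∑ u, if X u v then 1 else 0) = d₂)

/-- `h(x) = (1+x)·log(1+x) − x`. -/
def hfun (x : ℝ) : ℝ := (1 + x) * Real.log (1 + x) - x

/-- The linear function `f_Q(X) = Σ_{u,v} Q_{uv} X_{uv}`. -/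
def fQ {n m : ℕ} (Q : Matrix (Fin n) (Fin m) ℝ) (X : Fin n → Fin m → Bool) : ℝ :=
  ∑ u, ∑ v, Q u v * (if X u v then (1 : ℝ) else 0)


def ind {n m : ℕ} (X : Fin n → Fin m → Bool) (u : Fin n) (v : Fin m) : ℝ :=
  if X u v then 1 else 0

lemma ind_nonneg {n m : ℕ} (X : Fin n → Fin m → Bool) (u : Fin n) (v : Fin m) :
    0 ≤ ind X u v := by
  unfold ind; split_ifs <;> norm_num

lemma ind_le_one {n m : ℕ} (X : Fin n → Fin m → Bool) (u : Fin n) (v : Fin m) :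
    ind X u v ≤ 1 := by
  unfold ind; split_ifs <;> norm_num

lemma fQ_eq {n m : ℕ} (Q : Matrix (Fin n) (Fin m) ℝ) (X : Fin n → Fin m → Bool) :
    fQ Q X = ∑ u, ∑ v, Q u v * ind X u v := rfl

lemma mem_BBG {n m d₁ d₂ : ℕ} (X : Fin n → Fin m → Bool) :
    X ∈ BBG n m d₁ d₂ ↔ (∀ u, ∑ v, ind X u v = (d₁ : ℝ)) ∧ (∀ v, ∑ u, ind X u v = (d₂ : ℝ)) := by
  unfold BBG ind
  simp only [Finset.mem_filter, Finset.mem_univ, true_and]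
  constructor
  · rintro ⟨h1, h2⟩
    refine ⟨fun u => ?_, fun v => ?_⟩
    · rw [← h1 u]; push_cast; rfl
    · rw [← h2 v]; push_cast; rfl
  · rintro ⟨h1, h2⟩
    refine ⟨fun u => ?_, fun v => ?_⟩
    · have := h1 u; exact_mod_cast this
    · have := h2 v; exact_mod_cast this

/-- entrywise toggle -/
def tog {n m : ℕ} (D : Fin n → Fin m → Bool) (X : Fin n → Fin m → Bool) :
    Fin n → Fin m → Bool := fun u v => xor (X u v) (D u v)

lemma tog_tog {n m : ℕ} (D X : Fin n → Fin m → Bool) : tog D (tog D X) = X := by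
  funext u v; simp [tog]

lemma ind_tog {n m : ℕ} (D X : Fin n → Fin m → Bool) (u : Fin n) (v : Fin m)
    (h : D u v = true) : ind (tog D X) u v = 1 - ind X u v := by
  unfold ind tog; rw [h]; cases X u v <;> simp

/-- General switching identity. -/
lemma switch_general {n m d₁ d₂ : ℕ} (Q : Matrix (Fin n) (Fin m) ℝ)
    (D : Fin n → Fin m → Bool) (Δ : Fin n → Fin m → ℝ)
    (hr : ∀ u, ∑ v, Δ u v = 0) (hc : ∀ v, ∑ u, Δ u v = 0)
    (wA wB : (Fin n → Fin m → Bool) → ℝ)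
    (hw : ∀ X, wA X = wB (tog D X))
    (hΔ : ∀ X, wA X ≠ 0 → ∀ u v, ind (tog D X) u v = ind X u v + Δ u v)
    (g : ℝ → ℝ) :
    ∑ X ∈ BBG n m d₁ d₂, wA X * g (fQ Q X + ∑ u, ∑ v, Q u v * Δ u v)
      = ∑ X ∈ BBG n m d₁ d₂, wB X * g (fQ Q X) := by
  have e1 : ∀ F : (Fin n → Fin m → Bool) → ℝ, ∑ X ∈ BBG n m d₁ d₂, F X
      = ∑ X, if X ∈ BBG n m d₁ d₂ then F X else 0 := by
    intro F; rw [Finset.sum_ite_mem]; simp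
  rw [e1, e1]
  let e : (Fin n → Fin m → Bool) ≃ (Fin n → Fin m → Bool) :=
    ⟨tog D, tog D, tog_tog D, tog_tog D⟩
  rw [← Equiv.sum_comp e (fun X => if X ∈ BBG n m d₁ d₂ then wB X * g (fQ Q X) else 0)]
  refine Finset.sum_congr rfl fun X _ => ?_
  change _ = if tog D X ∈ BBG n m d₁ d₂ then wB (tog D X) * g (fQ Q (tog D X)) else 0
  rw [← hw]
  by_cases h0 : wA X = 0
  · simp [h0]
  · have h := hΔ X h0
    have hm : tog D X ∈ BBG n m d₁ d₂ ↔ X ∈ BBG n m d₁ d₂ := by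
      rw [mem_BBG, mem_BBG]
      simp only [h, Finset.sum_add_distrib, hr, hc, add_zero]
    have hf : fQ Q (tog D X) = fQ Q X + ∑ u, ∑ v, Q u v * Δ u v := by
      rw [fQ_eq, fQ_eq]
      simp only [h, mul_add, Finset.sum_add_distrib]
    rw [hf]
    simp only [hm]

def EE {n m : ℕ} (u : Fin n) (v : Fin m) (a : Fin n) (b : Fin m) : ℝ :=
  if a = u ∧ b = v then 1 else 0

lemma EE_row {n m : ℕ} (u : Fin n) (v : Fin m) (a : Fin n) :
    ∑ b, EE u v a b = if a = u then 1 else 0 := by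
  unfold EE
  by_cases h : a = u <;> simp [h]

lemma EE_col {n m : ℕ} (u : Fin n) (v : Fin m) (b : Fin m) :
    ∑ a, EE u v a b = if b = v then 1 else 0 := by
  unfold EE
  by_cases h : b = v <;> simp [h]

lemma EE_Q {n m : ℕ} (Q : Matrix (Fin n) (Fin m) ℝ) (u : Fin n) (v : Fin m) :
    ∑ a, ∑ b, Q a b * EE u v a b = Q u v := by
  unfold EE
  have : ∀ a, ∑ b, Q a b * (if a = u ∧ b = v then (1:ℝ) else 0) = if a = u then Q a v else 0 := by
    intro a
    by_cases h : a = u <;> simp [h]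
  simp only [this]
  simp

lemma ind_ne_zero {n m : ℕ} {X : Fin n → Fin m → Bool} {u : Fin n} {v : Fin m}
    (h : ind X u v ≠ 0) : X u v = true := by
  unfold ind at h; by_contra h'; simp at h'; simp [h'] at h

lemma one_sub_ind_ne_zero {n m : ℕ} {X : Fin n → Fin m → Bool} {u : Fin n} {v : Fin m}
    (h : 1 - ind X u v ≠ 0) : X u v = false := by
  unfold ind at h; by_contra h'; simp at h'; simp [h'] at h

lemma switch4 {n m d₁ d₂ : ℕ} (Q : Matrix (Fin n) (Fin m) ℝ) (u u' : Fin n) (v v' : Fin m)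
    (g : ℝ → ℝ) :
    ∑ X ∈ BBG n m d₁ d₂, ((1 - ind X u v) * ind X u v' * ind X u' v * (1 - ind X u' v')) *
        g (fQ Q X + (Q u v + Q u' v' - Q u v' - Q u' v))
      = ∑ X ∈ BBG n m d₁ d₂, (ind X u v * (1 - ind X u v') * (1 - ind X u' v) * ind X u' v') *
        g (fQ Q X) := by
  have key := switch_general (d₁ := d₁) (d₂ := d₂) Q
    (fun a b => decide ((a = u ∧ b = v) ∨ (a = u' ∧ b = v') ∨ (a = u ∧ b = v') ∨ (a = u' ∧ b = v)))
    (fun a b => EE u v a b + EE u' v' a b - EE u v' a b - EE u' v a b)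
    (by intro a; simp only [Finset.sum_add_distrib, Finset.sum_sub_distrib, EE_row]; ring)
    (by intro a; simp only [Finset.sum_add_distrib, Finset.sum_sub_distrib, EE_col]; ring)
    (fun X => (1 - ind X u v) * ind X u v' * ind X u' v * (1 - ind X u' v'))
    (fun X => ind X u v * (1 - ind X u v') * (1 - ind X u' v) * ind X u' v')
    (by
      intro X
      rw [ind_tog _ _ u v (by simp), ind_tog _ _ u' v (by simp), ind_tog _ _ u v' (by simp),
        ind_tog _ _ u' v' (by simp)]
      ring)
    (by
      intro X h a b
      simp only [mul_ne_zero_iff] at h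
      obtain ⟨⟨⟨h1, h2⟩, h3⟩, h4⟩ := h
      replace h1 := one_sub_ind_ne_zero h1
      replace h2 := ind_ne_zero h2
      replace h3 := ind_ne_zero h3
      replace h4 := one_sub_ind_ne_zero h4
      have hu : u ≠ u' := by rintro rfl; simp_all
      have hv : v ≠ v' := by rintro rfl; simp_all
      unfold ind tog EE
      by_cases a1 : a = u <;> by_cases a2 : a = u' <;> by_cases b1 : b = v <;>
        by_cases b2 : b = v' <;> simp_all)
    g
  have hS : ∑ a, ∑ b, Q a b * (EE u v a b + EE u' v' a b - EE u v' a b - EE u' v a b) = Q u v + Q u' v' - Q u v' - Q u' v := by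
    simp only [mul_add, mul_sub, Finset.sum_add_distrib, Finset.sum_sub_distrib, EE_Q]
  rw [hS] at key
  exact key

lemma switch6 {n m d₁ d₂ : ℕ} (Q : Matrix (Fin n) (Fin m) ℝ) (u u' x : Fin n) (v v' y : Fin m)
    (g : ℝ → ℝ) :
    ∑ X ∈ BBG n m d₁ d₂, ((1 - ind X u v) * (ind X u v' * ind X u' v * ind X x y *
        (1 - ind X x v') * (1 - ind X u' y))) *
        g (fQ Q X + (Q u v + Q x v' + Q u' y - Q u v' - Q u' v - Q x y))
      = ∑ X ∈ BBG n m d₁ d₂, (ind X u v * ((1 - ind X u v') * (1 - ind X u' v) *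
        (1 - ind X x y) * ind X x v' * ind X u' y)) *
        g (fQ Q X) := by
  have key := switch_general (d₁ := d₁) (d₂ := d₂) Q
    (fun a b => decide ((a = u ∧ b = v) ∨ (a = x ∧ b = v') ∨ (a = u' ∧ b = y) ∨
      (a = u ∧ b = v') ∨ (a = u' ∧ b = v) ∨ (a = x ∧ b = y)))
    (fun a b => EE u v a b + EE x v' a b + EE u' y a b - EE u v' a b - EE u' v a b - EE x y a b)
    (by intro a; simp only [Finset.sum_add_distrib, Finset.sum_sub_distrib, EE_row]; ring)
    (by intro a; simp only [Finset.sum_add_distrib, Finset.sum_sub_distrib, EE_col]; ring)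
    (fun X => (1 - ind X u v) * (ind X u v' * ind X u' v * ind X x y *
        (1 - ind X x v') * (1 - ind X u' y)))
    (fun X => ind X u v * ((1 - ind X u v') * (1 - ind X u' v) *
        (1 - ind X x y) * ind X x v' * ind X u' y))
    (by
      intro X
      rw [ind_tog _ _ u v (by simp), ind_tog _ _ u' v (by simp), ind_tog _ _ u v' (by simp),
        ind_tog _ _ x y (by simp), ind_tog _ _ x v' (by simp), ind_tog _ _ u' y (by simp)]
      ring)
    (by
      intro X h a b
      simp only [mul_ne_zero_iff] at h
      obtain ⟨h1, ⟨⟨⟨h2, h3⟩, h4⟩, h5⟩, h6⟩ := h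
      replace h1 := one_sub_ind_ne_zero h1
      replace h2 := ind_ne_zero h2
      replace h3 := ind_ne_zero h3
      replace h4 := ind_ne_zero h4
      replace h5 := one_sub_ind_ne_zero h5
      replace h6 := one_sub_ind_ne_zero h6
      unfold ind tog EE
      by_cases p1 : a = u ∧ b = v
      · obtain ⟨rfl, rfl⟩ := p1
        grind
      by_cases p2 : a = x ∧ b = v'
      · obtain ⟨rfl, rfl⟩ := p2
        grind
      by_cases p3 : a = u' ∧ b = y
      · obtain ⟨rfl, rfl⟩ := p3
        grind
      by_cases p4 : a = u ∧ b = v'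
      · obtain ⟨rfl, rfl⟩ := p4
        grind
      by_cases p5 : a = u' ∧ b = v
      · obtain ⟨rfl, rfl⟩ := p5
        grind
      by_cases p6 : a = x ∧ b = y
      · obtain ⟨rfl, rfl⟩ := p6
        grind
      simp [p1, p2, p3, p4, p5, p6])
    g
  have hS : ∑ a, ∑ b, Q a b * (EE u v a b + EE x v' a b + EE u' y a b - EE u v' a b - EE u' v a b -
      EE x y a b) = Q u v + Q x v' + Q u' y - Q u v' - Q u' v - Q x y := by
    simp only [mul_add, mul_sub, Finset.sum_add_distrib, Finset.sum_sub_distrib, EE_Q]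
  rw [hS] at key
  exact key


lemma sum4_comm {n m : ℕ} (F : Fin n → Fin m → Fin n → Fin m → ℝ) :
    ∑ u, ∑ v, ∑ u', ∑ v', F u v u' v' = ∑ u', ∑ v', ∑ u, ∑ v, F u v u' v' := by
  have h : ∀ G : Fin n → Fin m → ℝ, ∑ u, ∑ v, G u v = ∑ p : Fin n × Fin m, G p.1 p.2 := by
    intro G; simp only [Fintype.sum_prod_type]
  simp only [h]
  exact Finset.sum_comm

lemma flat6 {α β γ δ ε ζ : Type} [Fintype α] [Fintype β] [Fintype γ] [Fintype δ] [Fintype ε]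
    [Fintype ζ] (F : α → β → γ → δ → ε → ζ → ℝ) :
    ∑ a, ∑ b, ∑ c, ∑ d, ∑ e, ∑ f, F a b c d e f
      = ∑ p : α × β × γ × δ × ε × ζ, F p.1 p.2.1 p.2.2.1 p.2.2.2.1 p.2.2.2.2.1 p.2.2.2.2.2 := by
  simp only [Fintype.sum_prod_type]

lemma reorder_b {n m : ℕ} (F : Fin n → Fin m → Fin n → Fin m → Fin n → Fin m → ℝ) :
    ∑ u, ∑ v, ∑ u', ∑ v', ∑ x, ∑ y, F u v u' v' x y
      = ∑ x, ∑ v', ∑ u, ∑ y, ∑ u', ∑ v, F u v u' v' x y := by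
  rw [flat6, flat6 (fun x v' u y u' v => F u v u' v' x y)]
  exact Fintype.sum_equiv
    ⟨fun p => (p.2.2.2.2.1, p.2.2.2.1, p.1, p.2.2.2.2.2, p.2.2.1, p.2.1),
     fun q => (q.2.2.1, q.2.2.2.2.2, q.2.2.2.2.1, q.2.1, q.1, q.2.2.2.1),
     fun _ => rfl, fun _ => rfl⟩ _ _ (fun _ => rfl)

lemma reorder_c {n m : ℕ} (F : Fin n → Fin m → Fin n → Fin m → Fin n → Fin m → ℝ) :
    ∑ u, ∑ v, ∑ u', ∑ v', ∑ x, ∑ y, F u v u' v' x y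
      = ∑ u', ∑ y, ∑ v, ∑ x, ∑ v', ∑ u, F u v u' v' x y := by
  rw [flat6, flat6 (fun u' y v x v' u => F u v u' v' x y)]
  exact Fintype.sum_equiv
    ⟨fun p => (p.2.2.1, p.2.2.2.2.2, p.2.1, p.2.2.2.2.1, p.2.2.2.1, p.1),
     fun q => (q.2.2.2.2.2, q.2.2.1, q.1, q.2.2.2.2.1, q.2.2.2.1, q.2.1),
     fun _ => rfl, fun _ => rfl⟩ _ _ (fun _ => rfl)

/-- the six-switch weight -/
def ww (n m : ℕ) (x : Fin n → Fin m → ℝ) (u : Fin n) (v : Fin m) (u' : Fin n) (v' : Fin m)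
    (s : Fin n) (y : Fin m) : ℝ :=
  x u v' * x u' v * x s y * (1 - x s v') * (1 - x u' y)

lemma Rc {n m : ℕ} {d₁ : ℝ} (x : Fin n → Fin m → ℝ) (R : ∀ u, ∑ v, x u v = d₁) (u : Fin n) :
    ∑ v, (1 - x u v) = m - d₁ := by
  simp [Finset.sum_sub_distrib, R]

lemma Cc {n m : ℕ} {d₂ : ℝ} (x : Fin n → Fin m → ℝ) (C : ∀ v, ∑ u, x u v = d₂) (v : Fin m) :
    ∑ u, (1 - x u v) = n - d₂ := by
  simp [Finset.sum_sub_distrib, C]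

lemma up_pairs {n m : ℕ} {d₁ d₂ : ℝ} (x : Fin n → Fin m → ℝ)
    (R : ∀ u, ∑ v, x u v = d₁) (C : ∀ v, ∑ u, x u v = d₂) (u : Fin n) (v : Fin m) :
    ∑ u', ∑ v', x u v' * x u' v = d₁ * d₂ := by
  rw [Finset.sum_comm]
  simp only [← Finset.mul_sum, ← Finset.sum_mul, R, C]

lemma up_count {n m : ℕ} {d₁ d₂ : ℝ} (x : Fin n → Fin m → ℝ)
    (h0 : ∀ u v, 0 ≤ x u v)
    (R : ∀ u, ∑ v, x u v = d₁) (C : ∀ v, ∑ u, x u v = d₂) (u : Fin n) (v : Fin m) :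
    (m - d₁) * d₂ - d₁ * d₂ ≤
      ∑ u', ∑ v', (1 - x u v') * (1 - x u' v) * x u' v' := by
  have e1 : ∑ u', ∑ v', (1 - x u v') * x u' v' = (m - d₁) * d₂ := by
    rw [Finset.sum_comm]
    simp only [← Finset.mul_sum, ← Finset.sum_mul, C, Rc x R]
  have e2 : ∑ u', ∑ v', x u' v * x u' v' = d₁ * d₂ := by
    simp only [← Finset.mul_sum, ← Finset.sum_mul, C, R]
    ring
  rw [← e1, ← e2, ← Finset.sum_sub_distrib]
  refine Finset.sum_le_sum fun u' _ => ?_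
  rw [← Finset.sum_sub_distrib]
  refine Finset.sum_le_sum fun v' _ => ?_
  nlinarith [mul_nonneg (mul_nonneg (h0 u' v) (h0 u' v')) (h0 u v')]

lemma up_sum {n m : ℕ} {d₁ d₂ : ℝ} (x : Fin n → Fin m → ℝ)
    (h0 : ∀ u v, 0 ≤ x u v)
    (R : ∀ u, ∑ v, x u v = d₁) (C : ∀ v, ∑ u, x u v = d₂)
    (Q : Matrix (Fin n) (Fin m) ℝ) (κ : ℝ) (E : ℝ → ℝ)
    (hE : ∀ u v u' v', Q u v * E (Q u v + Q u' v') ≤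
      Q u v + κ * (3 / 2 * Q u v ^ 2 + 1 / 2 * Q u' v' ^ 2)) :
    ∑ u, ∑ v, Q u v * ∑ u', ∑ v', x u v' * x u' v * E (Q u v + Q u' v')
      ≤ d₁ * d₂ * (∑ u, ∑ v, Q u v + 2 * κ * ∑ u, ∑ v, Q u v ^ 2) := by
  have e1 : ∀ A : Fin n → Fin m → ℝ, ∑ u, ∑ v, ∑ u', ∑ v', x u v' * x u' v * A u v
      = d₁ * d₂ * ∑ u, ∑ v, A u v := by
    intro A
    simp only [← Finset.sum_mul, ← Finset.mul_sum, R, C]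
  have e2 : ∀ A : Fin n → Fin m → ℝ, ∑ u, ∑ v, ∑ u', ∑ v', x u v' * x u' v * A u' v'
      = d₁ * d₂ * ∑ u, ∑ v, A u v := by
    intro A
    rw [sum4_comm, ← e1]
    simp only [mul_comm]
  calc ∑ u, ∑ v, Q u v * ∑ u', ∑ v', x u v' * x u' v * E (Q u v + Q u' v')
      = ∑ u, ∑ v, ∑ u', ∑ v', x u v' * x u' v * (Q u v * E (Q u v + Q u' v')) := by
        simp only [Finset.mul_sum]
        refine Finset.sum_congr rfl fun u _ => Finset.sum_congr rfl fun v _ =>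
          Finset.sum_congr rfl fun u' _ => Finset.sum_congr rfl fun v' _ => by ring
    _ ≤ ∑ u, ∑ v, ∑ u', ∑ v', x u v' * x u' v *
          (Q u v + κ * (3 / 2 * Q u v ^ 2 + 1 / 2 * Q u' v' ^ 2)) := by
        refine Finset.sum_le_sum fun u _ => Finset.sum_le_sum fun v _ =>
          Finset.sum_le_sum fun u' _ => Finset.sum_le_sum fun v' _ => ?_
        exact mul_le_mul_of_nonneg_left (hE u v u' v') (mul_nonneg (h0 _ _) (h0 _ _))
    _ = ∑ u, ∑ v, ∑ u', ∑ v', x u v' * x u' v * (Q u v + κ * (3 / 2 * Q u v ^ 2))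
        + ∑ u, ∑ v, ∑ u', ∑ v', x u v' * x u' v * (κ * (1 / 2 * Q u' v' ^ 2)) := by
        simp only [← Finset.sum_add_distrib]
        refine Finset.sum_congr rfl fun u _ => Finset.sum_congr rfl fun v _ =>
          Finset.sum_congr rfl fun u' _ => Finset.sum_congr rfl fun v' _ => by ring
    _ = _ := by
        rw [e1 (fun u v => Q u v + κ * (3 / 2 * Q u v ^ 2)), e2 (fun u v => κ * (1 / 2 * Q u v ^ 2))]
        simp only [Finset.sum_add_distrib, ← Finset.mul_sum]
        ring

lemma ww_nonneg {n m : ℕ} (x : Fin n → Fin m → ℝ)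
    (h0 : ∀ u v, 0 ≤ x u v) (h1 : ∀ u v, x u v ≤ 1) (u : Fin n) (v : Fin m) (u' : Fin n)
    (v' : Fin m) (s : Fin n) (y : Fin m) : 0 ≤ ww n m x u v u' v' s y := by
  unfold ww
  have := h0 u v'; have := h0 u' v; have := h0 s y
  have := sub_nonneg.2 (h1 s v'); have := sub_nonneg.2 (h1 u' y)
  positivity

lemma ww_upper {n m : ℕ} {d₁ d₂ : ℝ} (x : Fin n → Fin m → ℝ)
    (h0 : ∀ u v, 0 ≤ x u v) (h1 : ∀ u v, x u v ≤ 1)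
    (R : ∀ u, ∑ v, x u v = d₁) (C : ∀ v, ∑ u, x u v = d₂) (u : Fin n) (v : Fin m) :
    ∑ u', ∑ v', ∑ s, ∑ y, ww n m x u v u' v' s y ≤ d₁ ^ 2 * d₂ * (n - d₂) := by
  calc ∑ u', ∑ v', ∑ s, ∑ y, ww n m x u v u' v' s y
      ≤ ∑ u', ∑ v', ∑ s, ∑ y, x u' v * (x u v' * ((1 - x s v') * x s y)) := by
        refine Finset.sum_le_sum fun u' _ => Finset.sum_le_sum fun v' _ =>
          Finset.sum_le_sum fun s _ => Finset.sum_le_sum fun y _ => ?_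
        have := h0 u v'; have := h0 u' v; have := h0 s y
        have := sub_nonneg.2 (h1 s v')
        have h : 0 ≤ x u' v * (x u v' * ((1 - x s v') * x s y)) := by positivity
        unfold ww
        nlinarith [mul_nonneg h (h0 u' y)]
    _ = _ := by
        simp only [← Finset.mul_sum, ← Finset.sum_mul, R, C, Cc x C]
        ring

lemma ww_lower {n m : ℕ} {d₁ d₂ : ℝ} (x : Fin n → Fin m → ℝ)
    (h0 : ∀ u v, 0 ≤ x u v)
    (R : ∀ u, ∑ v, x u v = d₁) (C : ∀ v, ∑ u, x u v = d₂) (u : Fin n) (v : Fin m) :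
    d₁ ^ 2 * d₂ * (n - 2 * d₂) ≤ ∑ u', ∑ v', ∑ s, ∑ y, ww n m x u v u' v' s y := by
  have hin : ∀ u' v', d₁ * (n - 2 * d₂) ≤ ∑ s, ∑ y, x s y * (1 - x s v') * (1 - x u' y) := by
    intro u' v'
    have a1 : ∑ s, ∑ y, x s y = n * d₁ := by simp [R]
    have a2 : ∑ s, ∑ y, x s v' * x s y = d₁ * d₂ := by
      simp only [← Finset.mul_sum, ← Finset.sum_mul, R, C]; ring
    have a3 : ∑ s, ∑ y, x u' y * x s y = d₁ * d₂ := by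
      rw [Finset.sum_comm]
      simp only [← Finset.mul_sum, ← Finset.sum_mul, R, C]
    have : d₁ * (n - 2 * d₂) = ∑ s, ∑ y, (x s y - x s v' * x s y - x u' y * x s y) := by
      simp only [Finset.sum_sub_distrib, a1, a2, a3]; ring
    rw [this]
    refine Finset.sum_le_sum fun s _ => Finset.sum_le_sum fun y _ => ?_
    nlinarith [mul_nonneg (mul_nonneg (h0 s y) (h0 s v')) (h0 u' y)]
  calc d₁ ^ 2 * d₂ * (n - 2 * d₂) = ∑ u', ∑ v', x u v' * x u' v * (d₁ * (n - 2 * d₂)) := by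
        simp only [← Finset.sum_mul, ← Finset.mul_sum, R, C]; ring
    _ ≤ ∑ u', ∑ v', x u v' * x u' v * ∑ s, ∑ y, x s y * (1 - x s v') * (1 - x u' y) := by
        refine Finset.sum_le_sum fun u' _ => Finset.sum_le_sum fun v' _ => ?_
        exact mul_le_mul_of_nonneg_left (hin u' v') (mul_nonneg (h0 _ _) (h0 _ _))
    _ = _ := by
        simp only [Finset.mul_sum]
        unfold ww
        refine Finset.sum_congr rfl fun u _ => Finset.sum_congr rfl fun v _ =>
          Finset.sum_congr rfl fun u' _ => Finset.sum_congr rfl fun v' _ => by ring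

lemma back_upper {n m : ℕ} {d₁ d₂ : ℝ} (x : Fin n → Fin m → ℝ)
    (h0 : ∀ u v, 0 ≤ x u v) (h1 : ∀ u v, x u v ≤ 1)
    (R : ∀ u, ∑ v, x u v = d₁) (C : ∀ v, ∑ u, x u v = d₂) (u : Fin n) (v : Fin m) :
    ∑ u', ∑ v', ∑ s, ∑ y, (1 - x u v') * (1 - x u' v) * (1 - x s y) * x s v' * x u' y
      ≤ d₁ * d₂ * (n - d₂) * (m - d₁) := by
  calc ∑ u', ∑ v', ∑ s, ∑ y, (1 - x u v') * (1 - x u' v) * (1 - x s y) * x s v' * x u' y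
      ≤ ∑ u', ∑ v', ∑ s, ∑ y, (1 - x u' v) * ((1 - x u v') * (x s v' * x u' y)) := by
        refine Finset.sum_le_sum fun u' _ => Finset.sum_le_sum fun v' _ =>
          Finset.sum_le_sum fun s _ => Finset.sum_le_sum fun y _ => ?_
        have := h0 s v'; have := h0 u' y
        have := sub_nonneg.2 (h1 u v'); have := sub_nonneg.2 (h1 u' v)
        have h : 0 ≤ (1 - x u' v) * ((1 - x u v') * (x s v' * x u' y)) := by positivity
        nlinarith [mul_nonneg h (h0 s y)]
    _ = _ := by
        simp only [← Finset.mul_sum, ← Finset.sum_mul, R, C, Cc x C, Rc x R]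
        ring

lemma low_sum {n m : ℕ} {d₁ d₂ : ℝ} (x : Fin n → Fin m → ℝ)
    (h0 : ∀ u v, 0 ≤ x u v) (h1 : ∀ u v, x u v ≤ 1)
    (R : ∀ u, ∑ v, x u v = d₁) (C : ∀ v, ∑ u, x u v = d₂) (hb : n * d₁ = m * d₂)
    (Q : Matrix (Fin n) (Fin m) ℝ) (hQ : ∀ u v, 0 ≤ Q u v) (θ : ℝ) (hθ : 0 ≤ θ) :
    d₁ ^ 2 * d₂ * ((n - 2 * d₂) * ∑ u, ∑ v, Q u v - 3 * θ * (n - d₂) * ∑ u, ∑ v, Q u v ^ 2) ≤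
    ∑ u, ∑ v, Q u v * ∑ u', ∑ v', ∑ s, ∑ y, ww n m x u v u' v' s y *
      Real.exp (-(θ * (Q u v + Q s v' + Q u' y))) := by
  have hw := ww_nonneg x h0 h1
  have ea : ∑ u, ∑ v, ∑ u', ∑ v', ∑ s, ∑ y, ww n m x u v u' v' s y * Q u v ^ 2
      ≤ d₁ ^ 2 * d₂ * (n - d₂) * ∑ u, ∑ v, Q u v ^ 2 := by
    simp only [← Finset.sum_mul]
    simp only [Finset.mul_sum]
    refine Finset.sum_le_sum fun u _ => Finset.sum_le_sum fun v _ => ?_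
    exact mul_le_mul_of_nonneg_right (ww_upper x h0 h1 R C u v) (sq_nonneg _)
  have eb : ∑ u, ∑ v, ∑ u', ∑ v', ∑ s, ∑ y, ww n m x u v u' v' s y * Q s v' ^ 2
      ≤ d₁ ^ 2 * d₂ * (n - d₂) * ∑ u, ∑ v, Q u v ^ 2 := by
    rw [reorder_b (fun u v u' v' s y => ww n m x u v u' v' s y * Q s v' ^ 2)]
    calc _ ≤ ∑ s, ∑ v', ∑ u, ∑ y, ∑ u', ∑ v, Q s v' ^ 2 *
            (x u v' * (x s y * ((1 - x u' y) * x u' v))) := by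
          refine Finset.sum_le_sum fun s _ => Finset.sum_le_sum fun v' _ =>
            Finset.sum_le_sum fun u _ => Finset.sum_le_sum fun y _ =>
            Finset.sum_le_sum fun u' _ => Finset.sum_le_sum fun v _ => ?_
          have := h0 u v'; have := h0 u' v; have := h0 s y
          have := sub_nonneg.2 (h1 u' y)
          have h : 0 ≤ Q s v' ^ 2 * (x u v' * (x s y * ((1 - x u' y) * x u' v))) := by positivity
          unfold ww
          nlinarith [mul_nonneg h (h0 s v')]
      _ = _ := by
          simp only [← Finset.mul_sum, ← Finset.sum_mul, R, C, Cc x C, Rc x R]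
          ring
  have ec : ∑ u, ∑ v, ∑ u', ∑ v', ∑ s, ∑ y, ww n m x u v u' v' s y * Q u' y ^ 2
      ≤ d₁ ^ 2 * d₂ * (n - d₂) * ∑ u, ∑ v, Q u v ^ 2 := by
    rw [reorder_c (fun u v u' v' s y => ww n m x u v u' v' s y * Q u' y ^ 2)]
    calc _ ≤ ∑ u', ∑ y, ∑ v, ∑ s, ∑ v', ∑ u, Q u' y ^ 2 *
            (x u' v * (x s y * ((1 - x s v') * x u v'))) := by
          refine Finset.sum_le_sum fun u' _ => Finset.sum_le_sum fun y _ =>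
            Finset.sum_le_sum fun v _ => Finset.sum_le_sum fun s _ =>
            Finset.sum_le_sum fun v' _ => Finset.sum_le_sum fun u _ => ?_
          have := h0 u v'; have := h0 u' v; have := h0 s y
          have := sub_nonneg.2 (h1 s v')
          have h : 0 ≤ Q u' y ^ 2 * (x u' v * (x s y * ((1 - x s v') * x u v'))) := by positivity
          unfold ww
          nlinarith [mul_nonneg h (h0 u' y)]
      _ = _ := by
          simp only [← Finset.mul_sum, ← Finset.sum_mul, R, C, Cc x C, Rc x R]
          linear_combination (-(∑ u, ∑ v, Q u v ^ 2) * d₁ * d₂) * hb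
  have e0 : d₁ ^ 2 * d₂ * (n - 2 * d₂) * ∑ u, ∑ v, Q u v ≤
      ∑ u, ∑ v, ∑ u', ∑ v', ∑ s, ∑ y, ww n m x u v u' v' s y * Q u v := by
    simp only [← Finset.sum_mul]
    simp only [Finset.mul_sum]
    refine Finset.sum_le_sum fun u _ => Finset.sum_le_sum fun v _ => ?_
    exact mul_le_mul_of_nonneg_right (ww_lower x h0 R C u v) (hQ _ _)
  calc _ ≤ ∑ u, ∑ v, ∑ u', ∑ v', ∑ s, ∑ y, ww n m x u v u' v' s y * Q u v
        - θ * (2 * ∑ u, ∑ v, ∑ u', ∑ v', ∑ s, ∑ y, ww n m x u v u' v' s y * Q u v ^ 2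
          + 1 / 2 * ∑ u, ∑ v, ∑ u', ∑ v', ∑ s, ∑ y, ww n m x u v u' v' s y * Q s v' ^ 2
          + 1 / 2 * ∑ u, ∑ v, ∑ u', ∑ v', ∑ s, ∑ y, ww n m x u v u' v' s y * Q u' y ^ 2) := by
        have := mul_le_mul_of_nonneg_left ea hθ
        have := mul_le_mul_of_nonneg_left eb hθ
        have := mul_le_mul_of_nonneg_left ec hθ
        linarith
    _ = ∑ u, ∑ v, ∑ u', ∑ v', ∑ s, ∑ y, ww n m x u v u' v' s y *
          (Q u v - θ * (2 * Q u v ^ 2 + 1 / 2 * Q s v' ^ 2 + 1 / 2 * Q u' y ^ 2)) := by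
        simp only [Finset.mul_sum, ← Finset.sum_add_distrib, ← Finset.sum_sub_distrib]
        refine Finset.sum_congr rfl fun u _ => Finset.sum_congr rfl fun v _ =>
          Finset.sum_congr rfl fun u' _ => Finset.sum_congr rfl fun v' _ =>
          Finset.sum_congr rfl fun s _ => Finset.sum_congr rfl fun y _ => by ring
    _ ≤ _ := by
        simp only [Finset.mul_sum]
        refine Finset.sum_le_sum fun u _ => Finset.sum_le_sum fun v _ =>
            Finset.sum_le_sum fun u' _ => Finset.sum_le_sum fun v' _ =>
            Finset.sum_le_sum fun s _ => Finset.sum_le_sum fun y _ => ?_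
        rw [mul_left_comm]
        refine mul_le_mul_of_nonneg_left ?_ (hw _ _ _ _ _ _)
        have h2 := Real.add_one_le_exp (-(θ * (Q u v + Q s v' + Q u' y)))
        have h3 := mul_le_mul_of_nonneg_left h2 (hQ u v)
        refine le_trans ?_ h3
        nlinarith [mul_nonneg hθ (sq_nonneg (Q u v - Q s v')),
          mul_nonneg hθ (sq_nonneg (Q u v - Q u' y))]

lemma upper_key {n m d₁ d₂ : ℕ} (Q : Matrix (Fin n) (Fin m) ℝ) (hQ : ∀ u v, 0 ≤ Q u v)
    (θ : ℝ) (hθ : 0 ≤ θ) (u : Fin n) (v : Fin m) :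
    ((m : ℝ) - d₁) * d₂ * ∑ X ∈ BBG n m d₁ d₂, ind X u v * Real.exp (θ * fQ Q X) ≤
    ∑ X ∈ BBG n m d₁ d₂, Real.exp (θ * fQ Q X) * ∑ u', ∑ v', ind X u v' * ind X u' v *
      Real.exp (θ * (Q u v + Q u' v')) := by
  have s1 : ((m : ℝ) - d₁) * d₂ * ∑ X ∈ BBG n m d₁ d₂, ind X u v * Real.exp (θ * fQ Q X) ≤
      ∑ X ∈ BBG n m d₁ d₂, ∑ u', ∑ v',
        (ind X u v * (1 - ind X u v') * (1 - ind X u' v) * ind X u' v') * Real.exp (θ * fQ Q X)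
      + ∑ X ∈ BBG n m d₁ d₂, ind X u v * Real.exp (θ * fQ Q X) * (d₁ * d₂) := by
    rw [Finset.mul_sum, ← Finset.sum_add_distrib]
    refine Finset.sum_le_sum fun X hX => ?_
    obtain ⟨R, C⟩ := (mem_BBG X).1 hX
    have h := up_count (ind X) (ind_nonneg X) R C u v
    have h2 := mul_le_mul_of_nonneg_left h
      (mul_nonneg (ind_nonneg X u v) (Real.exp_nonneg (θ * fQ Q X)))
    have e : ∑ u', ∑ v',
        (ind X u v * (1 - ind X u v') * (1 - ind X u' v) * ind X u' v') * Real.exp (θ * fQ Q X)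
        = ind X u v * Real.exp (θ * fQ Q X) *
          ∑ u', ∑ v', (1 - ind X u v') * (1 - ind X u' v) * ind X u' v' := by
      simp only [Finset.mul_sum]
      refine Finset.sum_congr rfl fun u' _ => Finset.sum_congr rfl fun v' _ => by ring
    rw [e]
    linarith
  have s2 : ∑ X ∈ BBG n m d₁ d₂, ∑ u', ∑ v',
        (ind X u v * (1 - ind X u v') * (1 - ind X u' v) * ind X u' v') * Real.exp (θ * fQ Q X)
      ≤ ∑ X ∈ BBG n m d₁ d₂, ∑ u', ∑ v', (1 - ind X u v) * (Real.exp (θ * fQ Q X) *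
        (ind X u v' * ind X u' v * Real.exp (θ * (Q u v + Q u' v')))) := by
    rw [Finset.sum_comm, Finset.sum_comm (s := BBG n m d₁ d₂)]
    refine Finset.sum_le_sum fun u' _ => ?_
    rw [Finset.sum_comm, Finset.sum_comm (s := BBG n m d₁ d₂)]
    refine Finset.sum_le_sum fun v' _ => ?_
    rw [← switch4 Q u u' v v' (fun z => Real.exp (θ * z))]
    refine Finset.sum_le_sum fun X _ => ?_
    have a1 := ind_nonneg X u v'
    have a2 := ind_nonneg X u' v
    have a3 := sub_nonneg.2 (ind_le_one X u v)
    have a4 := sub_nonneg.2 (ind_le_one X u' v')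
    have a5 := ind_nonneg X u' v'
    have hexp : Real.exp (θ * (fQ Q X + (Q u v + Q u' v' - Q u v' - Q u' v))) ≤
        Real.exp (θ * fQ Q X) * Real.exp (θ * (Q u v + Q u' v')) := by
      rw [← Real.exp_add]
      refine Real.exp_le_exp.2 ?_
      nlinarith [mul_nonneg hθ (hQ u v'), mul_nonneg hθ (hQ u' v)]
    calc _ ≤ ((1 - ind X u v) * ind X u v' * ind X u' v * 1) *
          (Real.exp (θ * fQ Q X) * Real.exp (θ * (Q u v + Q u' v'))) := by
          gcongr
          linarith
      _ = _ := by ring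
  have s3 : ∑ X ∈ BBG n m d₁ d₂, ind X u v * Real.exp (θ * fQ Q X) * (d₁ * d₂) ≤
      ∑ X ∈ BBG n m d₁ d₂, ∑ u', ∑ v', ind X u v * (Real.exp (θ * fQ Q X) *
        (ind X u v' * ind X u' v * Real.exp (θ * (Q u v + Q u' v')))) := by
    refine Finset.sum_le_sum fun X hX => ?_
    obtain ⟨R, C⟩ := (mem_BBG X).1 hX
    rw [← up_pairs (ind X) R C u v]
    simp only [Finset.mul_sum]
    refine Finset.sum_le_sum fun u' _ => Finset.sum_le_sum fun v' _ => ?_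
    have a1 := ind_nonneg X u v'
    have a2 := ind_nonneg X u' v
    have a3 := ind_nonneg X u v
    have h1 : 1 ≤ Real.exp (θ * (Q u v + Q u' v')) :=
      Real.one_le_exp (mul_nonneg hθ (add_nonneg (hQ _ _) (hQ _ _)))
    calc _ = ind X u v * (Real.exp (θ * fQ Q X) * (ind X u v' * ind X u' v * 1)) := by ring
      _ ≤ _ := by gcongr
  refine s1.trans ((add_le_add s2 s3).trans (le_of_eq ?_))
  rw [← Finset.sum_add_distrib]
  refine Finset.sum_congr rfl fun X _ => ?_
  simp only [Finset.mul_sum, ← Finset.sum_add_distrib]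
  refine Finset.sum_congr rfl fun u' _ => Finset.sum_congr rfl fun v' _ => by ring

lemma lower_key {n m d₁ d₂ : ℕ} (Q : Matrix (Fin n) (Fin m) ℝ) (hQ : ∀ u v, 0 ≤ Q u v)
    (θ : ℝ) (hθ : 0 ≤ θ) (u : Fin n) (v : Fin m) :
    ∑ X ∈ BBG n m d₁ d₂, Real.exp (-(θ * fQ Q X)) * ∑ u', ∑ v', ∑ s, ∑ y,
      ww n m (ind X) u v u' v' s y * Real.exp (-(θ * (Q u v + Q s v' + Q u' y))) ≤
    (d₁ : ℝ) * d₂ * (n - d₂) * m * ∑ X ∈ BBG n m d₁ d₂, ind X u v * Real.exp (-(θ * fQ Q X)) := by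
  have s2 : ∑ X ∈ BBG n m d₁ d₂, ∑ u', ∑ v', ∑ s, ∑ y, (1 - ind X u v) *
      (Real.exp (-(θ * fQ Q X)) *
        (ww n m (ind X) u v u' v' s y * Real.exp (-(θ * (Q u v + Q s v' + Q u' y)))))
      ≤ ∑ X ∈ BBG n m d₁ d₂, ∑ u', ∑ v', ∑ s, ∑ y, (ind X u v * ((1 - ind X u v') *
        (1 - ind X u' v) * (1 - ind X s y) * ind X s v' * ind X u' y)) *
        Real.exp (-(θ * fQ Q X)) := by
    rw [Finset.sum_comm, Finset.sum_comm (s := BBG n m d₁ d₂)]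
    refine Finset.sum_le_sum fun u' _ => ?_
    rw [Finset.sum_comm, Finset.sum_comm (s := BBG n m d₁ d₂)]
    refine Finset.sum_le_sum fun v' _ => ?_
    rw [Finset.sum_comm, Finset.sum_comm (s := BBG n m d₁ d₂)]
    refine Finset.sum_le_sum fun s _ => ?_
    rw [Finset.sum_comm, Finset.sum_comm (s := BBG n m d₁ d₂)]
    refine Finset.sum_le_sum fun y _ => ?_
    rw [← switch6 Q u u' s v v' y (fun z => Real.exp (-(θ * z)))]
    refine Finset.sum_le_sum fun X _ => ?_
    have a3 := sub_nonneg.2 (ind_le_one X u v)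
    have hw := ww_nonneg (ind X) (ind_nonneg X) (ind_le_one X) u v u' v' s y
    have hexp : Real.exp (-(θ * fQ Q X)) * Real.exp (-(θ * (Q u v + Q s v' + Q u' y))) ≤
        Real.exp (-(θ * (fQ Q X + (Q u v + Q s v' + Q u' y - Q u v' - Q u' v - Q s y)))) := by
      rw [← Real.exp_add]
      refine Real.exp_le_exp.2 ?_
      nlinarith [mul_nonneg hθ (hQ u v'), mul_nonneg hθ (hQ u' v), mul_nonneg hθ (hQ s y)]
    have := mul_le_mul_of_nonneg_left hexp (mul_nonneg a3 hw)
    unfold ww at this ⊢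
    linarith
  have s3 : ∑ X ∈ BBG n m d₁ d₂, ∑ u', ∑ v', ∑ s, ∑ y, (ind X u v * ((1 - ind X u v') *
        (1 - ind X u' v) * (1 - ind X s y) * ind X s v' * ind X u' y)) *
        Real.exp (-(θ * fQ Q X)) ≤
      ∑ X ∈ BBG n m d₁ d₂, ind X u v * Real.exp (-(θ * fQ Q X)) *
        ((d₁ : ℝ) * d₂ * (n - d₂) * (m - d₁)) := by
    refine Finset.sum_le_sum fun X hX => ?_
    obtain ⟨R, C⟩ := (mem_BBG X).1 hX
    refine le_trans (le_of_eq ?_) (mul_le_mul_of_nonneg_left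
      (back_upper (ind X) (ind_nonneg X) (ind_le_one X) R C u v)
      (mul_nonneg (ind_nonneg X u v) (Real.exp_nonneg _)))
    simp only [Finset.mul_sum]
    refine Finset.sum_congr rfl fun u' _ => Finset.sum_congr rfl fun v' _ =>
      Finset.sum_congr rfl fun s _ => Finset.sum_congr rfl fun y _ => by ring
  have s4 : ∑ X ∈ BBG n m d₁ d₂, ∑ u', ∑ v', ∑ s, ∑ y, ind X u v *
      (Real.exp (-(θ * fQ Q X)) *
        (ww n m (ind X) u v u' v' s y * Real.exp (-(θ * (Q u v + Q s v' + Q u' y))))) ≤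
      ∑ X ∈ BBG n m d₁ d₂, ind X u v * Real.exp (-(θ * fQ Q X)) *
        ((d₁ : ℝ) ^ 2 * d₂ * (n - d₂)) := by
    refine Finset.sum_le_sum fun X hX => ?_
    obtain ⟨R, C⟩ := (mem_BBG X).1 hX
    refine le_trans ?_ (mul_le_mul_of_nonneg_left
      (ww_upper (ind X) (ind_nonneg X) (ind_le_one X) R C u v)
      (mul_nonneg (ind_nonneg X u v) (Real.exp_nonneg _)))
    simp only [Finset.mul_sum]
    refine Finset.sum_le_sum fun u' _ => Finset.sum_le_sum fun v' _ =>
      Finset.sum_le_sum fun s _ => Finset.sum_le_sum fun y _ => ?_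
    have hw := ww_nonneg (ind X) (ind_nonneg X) (ind_le_one X) u v u' v' s y
    have h1 : Real.exp (-(θ * (Q u v + Q s v' + Q u' y))) ≤ 1 :=
      Real.exp_le_one_iff.2 (neg_nonpos.2
        (mul_nonneg hθ (add_nonneg (add_nonneg (hQ _ _) (hQ _ _)) (hQ _ _))))
    have a3 := ind_nonneg X u v
    calc _ ≤ ind X u v * (Real.exp (-(θ * fQ Q X)) * (ww n m (ind X) u v u' v' s y * 1)) := by
          gcongr
      _ = _ := by ring
  have e : ∑ X ∈ BBG n m d₁ d₂, Real.exp (-(θ * fQ Q X)) * ∑ u', ∑ v', ∑ s, ∑ y,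
      ww n m (ind X) u v u' v' s y * Real.exp (-(θ * (Q u v + Q s v' + Q u' y)))
      = ∑ X ∈ BBG n m d₁ d₂, ∑ u', ∑ v', ∑ s, ∑ y, (1 - ind X u v) *
      (Real.exp (-(θ * fQ Q X)) *
        (ww n m (ind X) u v u' v' s y * Real.exp (-(θ * (Q u v + Q s v' + Q u' y)))))
      + ∑ X ∈ BBG n m d₁ d₂, ∑ u', ∑ v', ∑ s, ∑ y, ind X u v *
      (Real.exp (-(θ * fQ Q X)) *
        (ww n m (ind X) u v u' v' s y * Real.exp (-(θ * (Q u v + Q s v' + Q u' y))))) := by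
    simp only [Finset.mul_sum, ← Finset.sum_add_distrib]
    refine Finset.sum_congr rfl fun X _ => Finset.sum_congr rfl fun u' _ =>
      Finset.sum_congr rfl fun v' _ =>
      Finset.sum_congr rfl fun s _ => Finset.sum_congr rfl fun y _ => by ring
  rw [e]
  refine (add_le_add (s2.trans s3) s4).trans (le_of_eq ?_)
  rw [← Finset.sum_mul, ← Finset.sum_mul]
  ring

lemma ode_bound (M M' g g' : ℝ → ℝ) (hM : ∀ θ, HasDerivAt M (M' θ) θ)
    (hg : ∀ θ, HasDerivAt g (g' θ) θ) (h : ∀ θ, 0 ≤ θ → M' θ ≤ M θ * g' θ) (hg0 : g 0 = 0)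
    (θ : ℝ) (hθ : 0 ≤ θ) : M θ ≤ M 0 * Real.exp (g θ) := by
  have hd : ∀ θ, HasDerivAt (fun s => M s * Real.exp (-(g s)))
      (M' θ * Real.exp (-(g θ)) + M θ * (Real.exp (-(g θ)) * -(g' θ))) θ := fun θ =>
    (hM θ).mul ((hg θ).neg.exp)
  have ha : AntitoneOn (fun s => M s * Real.exp (-(g s))) (Set.Ici 0) := by
    refine antitoneOn_of_deriv_nonpos (convex_Ici 0)
      (fun s _ => (hd s).continuousAt.continuousWithinAt)
      (fun s _ => (hd s).differentiableAt.differentiableWithinAt) ?_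
    intro s hs
    rw [interior_Ici] at hs
    rw [(hd s).deriv]
    have h1 := mul_le_mul_of_nonneg_right (h s (le_of_lt hs)) (Real.exp_nonneg (-(g s)))
    linarith
  have h2 := ha (Set.mem_Ici.2 le_rfl) (Set.mem_Ici.2 hθ) hθ
  simp only [hg0, neg_zero, Real.exp_zero, mul_one] at h2
  have h3 := mul_le_mul_of_nonneg_right h2 (Real.exp_nonneg (g θ))
  rwa [mul_assoc, ← Real.exp_add, neg_add_cancel, Real.exp_zero, mul_one] at h3

lemma mgf_deriv {ι : Type*} (S : Finset ι) (f : ι → ℝ) (θ : ℝ) :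
    HasDerivAt (fun s => ∑ X ∈ S, Real.exp (s * f X)) (∑ X ∈ S, f X * Real.exp (θ * f X)) θ := by
  apply HasDerivAt.fun_sum
  intro X _
  have := ((hasDerivAt_id θ).mul_const (f X)).exp
  simp only [id, one_mul] at this
  rw [mul_comm]
  exact this

lemma exp_chord (a θ s : ℝ) (ha : 0 < a) (hs : 0 ≤ s) (hs2 : s ≤ 2 * a) :
    Real.exp (θ * s) ≤ 1 + s * ((Real.exp (2 * a * θ) - 1) / (2 * a)) := by
  have h := convexOn_exp.2 (Set.mem_univ (2 * a * θ)) (Set.mem_univ 0)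
    (show 0 ≤ s / (2 * a) by positivity)
    (show 0 ≤ 1 - s / (2 * a) by rw [sub_nonneg, div_le_one (by positivity)]; exact hs2) (by ring)
  simp only [smul_eq_mul, mul_zero, add_zero, Real.exp_zero, mul_one] at h
  have e : s / (2 * a) * (2 * a * θ) = θ * s := by field_simp
  rw [e] at h
  refine h.trans (le_of_eq ?_)
  field_simp
  ring

lemma hfun_deriv (x : ℝ) (hx : 0 ≤ x) : HasDerivAt hfun (Real.log (1 + x)) x := by
  have h1 : HasDerivAt (fun y : ℝ => 1 + y) 1 x := (hasDerivAt_id x).const_add 1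
  have h2 := (h1.mul (h1.log (by linarith))).sub (hasDerivAt_id x)
  have e : 1 * Real.log (1 + x) + (1 + x) * (1 / (1 + x)) - 1 = Real.log (1 + x) := by
    field_simp; ring
  rw [e] at h2
  exact h2

lemma hfun_lower (x : ℝ) (hx : 0 ≤ x) : x ^ 2 / (2 + x) ≤ hfun x := by
  have h := Real.le_log_one_add_of_nonneg hx
  unfold hfun
  have h2 := mul_le_mul_of_nonneg_left h (by linarith : 0 ≤ 1 + x)
  have e : (1 + x) * (2 * x / (x + 2)) - x = x ^ 2 / (2 + x) := by
    field_simp; ring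
  linarith

lemma hfun_scale (p x : ℝ) (hp : 0 ≤ p) (hp1 : p ≤ 1) (hx : 0 ≤ x) :
    p ^ 2 * hfun x ≤ hfun (p * x) := by
  have hd : ∀ y, 0 ≤ y → HasDerivAt (fun y => hfun (p * y) - p ^ 2 * hfun y)
      (Real.log (1 + p * y) * p - p ^ 2 * Real.log (1 + y)) y := by
    intro y hy
    have h1 : HasDerivAt (fun y : ℝ => p * y) p y := by
      simpa using (hasDerivAt_id y).const_mul p
    exact ((hfun_deriv (p * y) (mul_nonneg hp hy)).comp y h1).sub
      ((hfun_deriv y hy).const_mul (p ^ 2))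
  have hm : MonotoneOn (fun y => hfun (p * y) - p ^ 2 * hfun y) (Set.Ici 0) := by
    refine monotoneOn_of_deriv_nonneg (convex_Ici 0)
      (fun s hs => (hd s hs).continuousAt.continuousWithinAt)
      (fun s hs => (hd s (interior_subset hs)).differentiableAt.differentiableWithinAt) ?_
    intro y hy
    have hy0 : 0 ≤ y := interior_subset hy
    rw [(hd y hy0).deriv]
    have hb : p * Real.log (1 + y) ≤ Real.log (1 + p * y) := by
      rw [← Real.log_rpow (by linarith)]
      refine Real.log_le_log (Real.rpow_pos_of_pos (by linarith) _) ?_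
      exact rpow_one_add_le_one_add_mul_self (by linarith) hp hp1
    nlinarith [mul_le_mul_of_nonneg_left hb hp]
  have h := hm (Set.mem_Ici.2 le_rfl) (Set.mem_Ici.2 hx) hx
  simp [hfun] at h
  unfold hfun
  linarith

lemma weighted_sum {n m : ℕ} (S : Finset (Fin n → Fin m → Bool)) (Q : Matrix (Fin n) (Fin m) ℝ)
    (F : (Fin n → Fin m → Bool) → ℝ) :
    ∑ X ∈ S, fQ Q X * F X = ∑ u, ∑ v, Q u v * ∑ X ∈ S, ind X u v * F X := by
  simp only [fQ_eq, Finset.sum_mul, Finset.mul_sum]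
  rw [Finset.sum_comm]
  refine Finset.sum_congr rfl fun u _ => ?_
  rw [Finset.sum_comm]
  refine Finset.sum_congr rfl fun v _ => Finset.sum_congr rfl fun X _ => by ring

lemma upper_mgf_deriv {n m d₁ d₂ : ℕ} (hd₂ : 0 < d₂) (hdm : d₁ < m) (a : ℝ) (ha : 0 < a)
    (Q : Matrix (Fin n) (Fin m) ℝ) (hQ : ∀ u v, Q u v ∈ Set.Icc (0 : ℝ) a)
    (θ : ℝ) (hθ : 0 ≤ θ) :
    ∑ X ∈ BBG n m d₁ d₂, fQ Q X * Real.exp (θ * fQ Q X) ≤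
      (∑ X ∈ BBG n m d₁ d₂, Real.exp (θ * fQ Q X)) *
      ((d₁ : ℝ) / (m - d₁) * (∑ u, ∑ v, Q u v +
        2 * ((Real.exp (2 * a * θ) - 1) / (2 * a)) * ∑ u, ∑ v, Q u v ^ 2)) := by
  set κ := (Real.exp (2 * a * θ) - 1) / (2 * a) with hκ
  have hκ0 : 0 ≤ κ := by
    have : 1 ≤ Real.exp (2 * a * θ) := Real.one_le_exp (by positivity)
    exact div_nonneg (by linarith) (by positivity)
  have hm : (0 : ℝ) < m - d₁ := by
    have : (d₁ : ℝ) < m := by exact_mod_cast hdm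
    linarith
  have hd : (0 : ℝ) < d₂ := by exact_mod_cast hd₂
  have hE : ∀ u v u' v', Q u v * Real.exp (θ * (Q u v + Q u' v')) ≤
      Q u v + κ * (3 / 2 * Q u v ^ 2 + 1 / 2 * Q u' v' ^ 2) := by
    intro u v u' v'
    have c := exp_chord a θ (Q u v + Q u' v') ha (add_nonneg (hQ _ _).1 (hQ _ _).1)
      (by linarith [(hQ u v).2, (hQ u' v').2])
    have c2 := mul_le_mul_of_nonneg_left c (hQ u v).1
    rw [← hκ] at c2
    nlinarith [mul_nonneg hκ0 (sq_nonneg (Q u v - Q u' v'))]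
  have key : ((m : ℝ) - d₁) * d₂ * ∑ X ∈ BBG n m d₁ d₂, fQ Q X * Real.exp (θ * fQ Q X) ≤
      (∑ X ∈ BBG n m d₁ d₂, Real.exp (θ * fQ Q X)) *
        ((d₁ : ℝ) * d₂ * (∑ u, ∑ v, Q u v + 2 * κ * ∑ u, ∑ v, Q u v ^ 2)) := by
    rw [weighted_sum]
    calc _ = ∑ u, ∑ v, Q u v * (((m : ℝ) - d₁) * d₂ *
            ∑ X ∈ BBG n m d₁ d₂, ind X u v * Real.exp (θ * fQ Q X)) := by
          rw [Finset.mul_sum]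
          refine Finset.sum_congr rfl fun u _ => ?_
          rw [Finset.mul_sum]
          refine Finset.sum_congr rfl fun v _ => by ring
      _ ≤ ∑ u, ∑ v, Q u v * ∑ X ∈ BBG n m d₁ d₂, Real.exp (θ * fQ Q X) *
            ∑ u', ∑ v', ind X u v' * ind X u' v * Real.exp (θ * (Q u v + Q u' v')) := by
          refine Finset.sum_le_sum fun u _ => Finset.sum_le_sum fun v _ => ?_
          exact mul_le_mul_of_nonneg_left
            (upper_key Q (fun u v => (hQ u v).1) θ hθ u v) (hQ u v).1
      _ = ∑ X ∈ BBG n m d₁ d₂, Real.exp (θ * fQ Q X) * ∑ u, ∑ v, Q u v *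
            ∑ u', ∑ v', ind X u v' * ind X u' v * Real.exp (θ * (Q u v + Q u' v')) := by
          simp only [Finset.mul_sum (s := BBG n m d₁ d₂)]
          simp only [Finset.sum_comm (t := BBG n m d₁ d₂)]
          refine Finset.sum_congr rfl fun X _ => ?_
          rw [Finset.mul_sum]
          refine Finset.sum_congr rfl fun u _ => ?_
          rw [Finset.mul_sum]
          refine Finset.sum_congr rfl fun v _ => by ring
      _ ≤ _ := by
          rw [Finset.sum_mul]
          refine Finset.sum_le_sum fun X hX => ?_
          obtain ⟨R, C⟩ := (mem_BBG X).1 hX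
          exact mul_le_mul_of_nonneg_left
            (up_sum (ind X) (ind_nonneg X) R C Q κ (fun z => Real.exp (θ * z)) hE)
            (Real.exp_nonneg _)
  rw [← mul_le_mul_iff_right₀ (mul_pos hm hd)]
  refine key.trans (le_of_eq ?_)
  field_simp

lemma lower_mgf_deriv {n m d₁ d₂ : ℕ} (hd₁ : 0 < d₁) (hd₂ : 0 < d₂) (hm : 0 < m) (hdn : d₂ < n)
    (hbal : n * d₁ = m * d₂)
    (Q : Matrix (Fin n) (Fin m) ℝ) (hQ : ∀ u v, 0 ≤ Q u v)
    (θ : ℝ) (hθ : 0 ≤ θ) :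
    (∑ X ∈ BBG n m d₁ d₂, Real.exp (-(θ * fQ Q X))) *
      ((d₁ : ℝ) / m * (((n : ℝ) - 2 * d₂) / (n - d₂) * ∑ u, ∑ v, Q u v
        - 3 * θ * ∑ u, ∑ v, Q u v ^ 2)) ≤
    ∑ X ∈ BBG n m d₁ d₂, fQ Q X * Real.exp (-(θ * fQ Q X)) := by
  have hn' : (0 : ℝ) < n - d₂ := by
    have : (d₂ : ℝ) < n := by exact_mod_cast hdn
    linarith
  have h1 : (0 : ℝ) < d₁ := by exact_mod_cast hd₁
  have h2 : (0 : ℝ) < d₂ := by exact_mod_cast hd₂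
  have h3 : (0 : ℝ) < m := by exact_mod_cast hm
  have hb : (n : ℝ) * d₁ = m * d₂ := by exact_mod_cast hbal
  have key : (∑ X ∈ BBG n m d₁ d₂, Real.exp (-(θ * fQ Q X))) *
      ((d₁ : ℝ) ^ 2 * d₂ * ((n - 2 * d₂) * ∑ u, ∑ v, Q u v
        - 3 * θ * (n - d₂) * ∑ u, ∑ v, Q u v ^ 2)) ≤
      (d₁ : ℝ) * d₂ * (n - d₂) * m *
        ∑ X ∈ BBG n m d₁ d₂, fQ Q X * Real.exp (-(θ * fQ Q X)) := by
    rw [weighted_sum]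
    calc _ ≤ ∑ X ∈ BBG n m d₁ d₂, Real.exp (-(θ * fQ Q X)) * ∑ u, ∑ v, Q u v *
            ∑ u', ∑ v', ∑ s, ∑ y, ww n m (ind X) u v u' v' s y *
              Real.exp (-(θ * (Q u v + Q s v' + Q u' y))) := by
          rw [Finset.sum_mul]
          refine Finset.sum_le_sum fun X hX => ?_
          obtain ⟨R, C⟩ := (mem_BBG X).1 hX
          exact mul_le_mul_of_nonneg_left
            (low_sum (ind X) (ind_nonneg X) (ind_le_one X) R C hb Q hQ θ hθ)
            (Real.exp_nonneg _)
      _ = ∑ u, ∑ v, Q u v * ∑ X ∈ BBG n m d₁ d₂, Real.exp (-(θ * fQ Q X)) *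
            ∑ u', ∑ v', ∑ s, ∑ y, ww n m (ind X) u v u' v' s y *
              Real.exp (-(θ * (Q u v + Q s v' + Q u' y))) := by
          simp only [Finset.mul_sum (s := BBG n m d₁ d₂)]
          simp only [Finset.sum_comm (t := BBG n m d₁ d₂)]
          refine Finset.sum_congr rfl fun X _ => ?_
          rw [Finset.mul_sum]
          refine Finset.sum_congr rfl fun u _ => ?_
          rw [Finset.mul_sum]
          refine Finset.sum_congr rfl fun v _ => by ring
      _ ≤ ∑ u, ∑ v, Q u v * ((d₁ : ℝ) * d₂ * (n - d₂) * m *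
            ∑ X ∈ BBG n m d₁ d₂, ind X u v * Real.exp (-(θ * fQ Q X))) := by
          refine Finset.sum_le_sum fun u _ => Finset.sum_le_sum fun v _ => ?_
          exact mul_le_mul_of_nonneg_left (lower_key Q hQ θ hθ u v) (hQ u v)
      _ = _ := by
          rw [Finset.mul_sum]
          refine Finset.sum_congr rfl fun u _ => ?_
          rw [Finset.mul_sum]
          refine Finset.sum_congr rfl fun v _ => by ring
  have hpos : 0 < (d₁ : ℝ) * d₂ * (n - d₂) * m := by positivity
  rw [← mul_le_mul_iff_right₀ hpos]
  refine le_trans (le_of_eq ?_) key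
  field_simp

lemma markov {ι : Type*} (S : Finset ι) (f : ι → ℝ) (P : ι → Prop) [DecidablePred P] (r : ℝ)
    (h : ∀ X ∈ S, P X → r ≤ f X) :
    ((S.filter P).card : ℝ) * Real.exp r ≤ ∑ X ∈ S, Real.exp (f X) := by
  calc ((S.filter P).card : ℝ) * Real.exp r = ∑ X ∈ S.filter P, Real.exp r := by simp
    _ ≤ ∑ X ∈ S.filter P, Real.exp (f X) := by
        refine Finset.sum_le_sum fun X hX => ?_
        rw [Finset.mem_filter] at hX
        exact Real.exp_le_exp.2 (h X hX.1 hX.2)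
    _ ≤ _ := Finset.sum_le_sum_of_subset_of_nonneg (Finset.filter_subset _ _)
        (fun X _ _ => Real.exp_nonneg _)

lemma upper_tail {n m d₁ d₂ : ℕ} (hm : 0 < m) (hd₁ : 0 < d₁) (hd₂ : 0 < d₂)
    (hne : (BBG n m d₁ d₂).Nonempty) (hdm : d₁ < m) (a : ℝ) (ha : 0 < a)
    (Q : Matrix (Fin n) (Fin m) ℝ) (hQ : ∀ u v, Q u v ∈ Set.Icc (0 : ℝ) a)
    (μ σ2 p γ₀ : ℝ) (hσ0 : 0 < σ2)
    (hμ : μ = (d₁ : ℝ) / m * ∑ u, ∑ v, Q u v)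
    (hσ : σ2 = (d₁ : ℝ) / m * ∑ u, ∑ v, (Q u v) ^ 2)
    (hp : p = 1 - (d₁ : ℝ) / m)
    (hγ : γ₀ = (d₁ : ℝ) / ((m : ℝ) - d₁))
    (t : ℝ) (ht : 0 ≤ t) :
    (((BBG n m d₁ d₂).filter fun X => γ₀ * μ + t ≤ fQ Q X - μ).card : ℝ) /
        ((BBG n m d₁ d₂).card : ℝ)
      ≤ Real.exp (-(p / 2 * (σ2 / a ^ 2) * hfun (a * t / σ2))) := by
  have hm' : (0 : ℝ) < m := by exact_mod_cast hm
  have hd' : (0 : ℝ) < d₁ := by exact_mod_cast hd₁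
  have hdm' : (0 : ℝ) < m - d₁ := by
    have : (d₁ : ℝ) < m := by exact_mod_cast hdm
    linarith
  have hN : (0 : ℝ) < (BBG n m d₁ d₂).card := by exact_mod_cast hne.card_pos
  have hpe : p = (m - d₁) / m := by rw [hp]; field_simp
  have hp0 : 0 < p := by rw [hpe]; positivity
  have hp1 : p ≤ 1 := by
    rw [hp]
    have : 0 ≤ (d₁ : ℝ) / m := by positivity
    linarith
  have hμp : (d₁ : ℝ) / (m - d₁) * ∑ u, ∑ v, Q u v = μ / p := by
    rw [hμ, hpe]; field_simp
  have hσp : (d₁ : ℝ) / (m - d₁) * ∑ u, ∑ v, Q u v ^ 2 = σ2 / p := by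
    rw [hσ, hpe]; field_simp
  have hγμ : γ₀ * μ + μ = μ / p := by
    rw [hγ, hpe]; field_simp; ring
  have hM : ∀ θ, 0 ≤ θ → ∑ X ∈ BBG n m d₁ d₂, Real.exp (θ * fQ Q X) ≤
      (BBG n m d₁ d₂).card * Real.exp (θ * (μ / p) +
        σ2 / p * ((Real.exp (2 * a * θ) - 1 - 2 * a * θ) / (2 * a ^ 2))) := by
    intro θ hθ
    have h := ode_bound (fun s => ∑ X ∈ BBG n m d₁ d₂, Real.exp (s * fQ Q X))
      (fun s => ∑ X ∈ BBG n m d₁ d₂, fQ Q X * Real.exp (s * fQ Q X))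
      (fun s => s * (μ / p) + σ2 / p * ((Real.exp (2 * a * s) - 1 - 2 * a * s) / (2 * a ^ 2)))
      (fun s => 1 * (μ / p) + σ2 / p * ((Real.exp (2 * a * s) * (2 * a * 1) - 2 * a * 1) /
        (2 * a ^ 2)))
      (fun s => mgf_deriv _ _ s)
      (fun s => by
        have i1 := (hasDerivAt_id s).const_mul (2 * a)
        exact ((hasDerivAt_id s).mul_const _).add
          ((((i1.exp.sub_const 1).sub i1).div_const _).const_mul _))
      (fun s hs => by
        refine (upper_mgf_deriv hd₂ hdm a ha Q hQ s hs).trans (le_of_eq ?_)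
        congr 1
        rw [mul_add, hμp, mul_left_comm, hσp]
        field_simp)
      (by simp) θ hθ
    simpa using h
  set x := a * t / σ2 with hx
  have hx0 : 0 ≤ x := by positivity
  have hpx : 0 < 1 + p * x := by positivity
  set θ := Real.log (1 + p * x) / (2 * a) with hθd
  have hθ : 0 ≤ θ := div_nonneg (Real.log_nonneg (by
    have : 0 ≤ p * x := by positivity
    linarith)) (by positivity)
  have h2 : 2 * a * θ = Real.log (1 + p * x) := by rw [hθd]; field_simp
  have h3 := hM θ hθ
  have h4 := markov (BBG n m d₁ d₂) (fun X => θ * fQ Q X)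
    (fun X => γ₀ * μ + t ≤ fQ Q X - μ) (θ * (μ / p + t)) (fun X _ hX => by
      refine mul_le_mul_of_nonneg_left ?_ hθ
      linarith)
  have h5 := h4.trans h3
  rw [h2, Real.exp_log hpx] at h5
  have h6 : ((BBG n m d₁ d₂).filter fun X => γ₀ * μ + t ≤ fQ Q X - μ).card /
        ((BBG n m d₁ d₂).card : ℝ) ≤ Real.exp (-(σ2 / (2 * p * a ^ 2) * hfun (p * x))) := by
    rw [div_le_iff₀ hN, mul_comm (Real.exp _)]
    rw [← le_div_iff₀ (Real.exp_pos _), mul_div_assoc, ← Real.exp_sub] at h5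
    refine h5.trans (le_of_eq ?_)
    congr 2
    have hte : t = x * σ2 / a := by rw [hx]; field_simp
    rw [hte, hθd]
    unfold hfun
    field_simp
    ring
  refine h6.trans (Real.exp_le_exp.2 (neg_le_neg ?_))
  have h7 := mul_le_mul_of_nonneg_left (hfun_scale p x hp0.le hp1 hx0)
    (show 0 ≤ σ2 / (2 * p * a ^ 2) by positivity)
  refine le_trans (le_of_eq ?_) h7
  field_simp

lemma lower_tail {n m d₁ d₂ : ℕ} (hm : 0 < m) (hd₁ : 0 < d₁) (hd₂ : 0 < d₂)
    (hbal : n * d₁ = m * d₂)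
    (hne : (BBG n m d₁ d₂).Nonempty) (hdm : d₁ < m)
    (Q : Matrix (Fin n) (Fin m) ℝ) (hQ : ∀ u v, 0 ≤ Q u v)
    (μ σ2 γ₀ : ℝ) (hσ0 : 0 < σ2)
    (hμ : μ = (d₁ : ℝ) / m * ∑ u, ∑ v, Q u v)
    (hσ : σ2 = (d₁ : ℝ) / m * ∑ u, ∑ v, (Q u v) ^ 2)
    (hγ : γ₀ = (d₁ : ℝ) / ((m : ℝ) - d₁))
    (t : ℝ) (ht : 0 ≤ t) :
    (((BBG n m d₁ d₂).filter fun X => γ₀ * μ + t ≤ -(fQ Q X - μ)).card : ℝ) /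
        ((BBG n m d₁ d₂).card : ℝ)
      ≤ Real.exp (-(t ^ 2 / (6 * σ2))) := by
  have hm' : (0 : ℝ) < m := by exact_mod_cast hm
  have hd' : (0 : ℝ) < d₁ := by exact_mod_cast hd₁
  have hd2' : (0 : ℝ) < d₂ := by exact_mod_cast hd₂
  have hdm' : (0 : ℝ) < m - d₁ := by
    have : (d₁ : ℝ) < m := by exact_mod_cast hdm
    linarith
  have hb : (n : ℝ) * d₁ = m * d₂ := by exact_mod_cast hbal
  have hdn : d₂ < n := by
    by_contra hcon
    push Not at hcon
    have : n * d₁ < m * d₂ := by nlinarith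
    omega
  have hdn' : (0 : ℝ) < n - d₂ := by
    have : (d₂ : ℝ) < n := by exact_mod_cast hdn
    linarith
  have hN : (0 : ℝ) < (BBG n m d₁ d₂).card := by exact_mod_cast hne.card_pos
  set r := ((n : ℝ) - 2 * d₂) / (n - d₂) * μ with hr
  have hrγ : μ - γ₀ * μ = r := by
    have : 1 - γ₀ = ((n : ℝ) - 2 * d₂) / (n - d₂) := by
      rw [hγ, eq_div_iff hdn'.ne']
      field_simp
      linear_combination (-1 : ℝ) * hb
    rw [hr, ← this]; ring
  have hM : ∀ θ, 0 ≤ θ → ∑ X ∈ BBG n m d₁ d₂, Real.exp (θ * -fQ Q X) ≤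
      (BBG n m d₁ d₂).card * Real.exp (θ * (-r) + 3 * σ2 / 2 * θ ^ 2) := by
    intro θ hθ
    have h := ode_bound (fun s => ∑ X ∈ BBG n m d₁ d₂, Real.exp (s * -fQ Q X))
      (fun s => ∑ X ∈ BBG n m d₁ d₂, -fQ Q X * Real.exp (s * -fQ Q X))
      (fun s => s * (-r) + 3 * σ2 / 2 * s ^ 2)
      (fun s => 1 * (-r) + 3 * σ2 / 2 * (2 * s))
      (fun s => mgf_deriv _ _ s)
      (fun s => by
        have i1 := hasDerivAt_pow 2 s
        simp only [Nat.cast_ofNat, Nat.add_one_sub_one, pow_one] at i1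
        exact ((hasDerivAt_id s).mul_const _).add (i1.const_mul _))
      (fun s hs => by
        have h := lower_mgf_deriv hd₁ hd₂ hm hdn hbal Q hQ s hs
        have e : (d₁ : ℝ) / m * (((n : ℝ) - 2 * d₂) / (n - d₂) * ∑ u, ∑ v, Q u v
          - 3 * s * ∑ u, ∑ v, Q u v ^ 2) = r - 3 * s * σ2 := by
          rw [hr, hμ, hσ]; ring
        rw [e] at h
        simp only [neg_mul, mul_neg, Finset.sum_neg_distrib]
        linarith)
      (by simp) θ hθ
    simpa using h
  set θ := t / (3 * σ2) with hθd
  have hθ : 0 ≤ θ := by positivity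
  have h3 := hM θ hθ
  have h4 := markov (BBG n m d₁ d₂) (fun X => θ * -fQ Q X)
    (fun X => γ₀ * μ + t ≤ -(fQ Q X - μ)) (θ * (-r + t)) (fun X _ hX => by
      refine mul_le_mul_of_nonneg_left ?_ hθ
      linarith)
  have h5 := h4.trans h3
  rw [div_le_iff₀ hN, mul_comm (Real.exp _)]
  rw [← le_div_iff₀ (Real.exp_pos _), mul_div_assoc, ← Real.exp_sub] at h5
  refine h5.trans (le_of_eq ?_)
  congr 2
  rw [hθd]
  field_simp
  ring

theorem linear_function_concentration (n m d₁ d₂ : ℕ)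
    (hn : 0 < n) (hm : 0 < m) (hd₁ : 0 < d₁) (hd₂ : 0 < d₂)
    (hbal : n * d₁ = m * d₂) (hne : (BBG n m d₁ d₂).Nonempty)
    (hdm : d₁ < m)
    (a : ℝ) (ha : 0 < a)
    (Q : Matrix (Fin n) (Fin m) ℝ) (hQ : ∀ u v, Q u v ∈ Set.Icc (0 : ℝ) a)
    (hQ0 : Q ≠ 0)
    (μ σ2 c₀ γ₀ : ℝ)
    (hμ : μ = (d₁ : ℝ) / m * ∑ u, ∑ v, Q u v)
    (hσ : σ2 = (d₁ : ℝ) / m * ∑ u, ∑ v, (Q u v) ^ 2)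
    (hc : c₀ = (1 / 3) * (1 - (d₁ : ℝ) / m))
    (hγ : γ₀ = (d₁ : ℝ) / ((m : ℝ) - d₁))
    (t : ℝ) (ht : 0 ≤ t) :
    ((((BBG n m d₁ d₂).filter fun X => γ₀ * μ + t ≤ fQ Q X - μ).card : ℝ) /
        ((BBG n m d₁ d₂).card : ℝ)
      ≤ Real.exp (-c₀ * (σ2 / a ^ 2) * hfun (a * t / σ2))) ∧
    ((((BBG n m d₁ d₂).filter fun X => γ₀ * μ + t ≤ |fQ Q X - μ|).card : ℝ) /
        ((BBG n m d₁ d₂).card : ℝ)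
      ≤ 2 * Real.exp (-c₀ * t ^ 2 / (2 * (σ2 + a * t / 3)))) := by
  have hm' : (0 : ℝ) < m := by exact_mod_cast hm
  have hd' : (0 : ℝ) < d₁ := by exact_mod_cast hd₁
  have hσ0 : 0 < σ2 := by
    obtain ⟨u, v, huv⟩ : ∃ u v, Q u v ≠ 0 := by
      by_contra hcon
      push Not at hcon
      exact hQ0 (by ext u v; simpa using hcon u v)
    rw [hσ]
    refine mul_pos (by positivity) ?_
    refine Finset.sum_pos' (fun u _ => Finset.sum_nonneg fun v _ => sq_nonneg _)
      ⟨u, Finset.mem_univ _, ?_⟩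
    exact Finset.sum_pos' (fun v _ => sq_nonneg _) ⟨v, Finset.mem_univ _, by positivity⟩
  have hp0 : 0 < 1 - (d₁ : ℝ) / m := by
    have : (d₁ : ℝ) < m := by exact_mod_cast hdm
    rw [sub_pos, div_lt_one hm']
    exact this
  have hp1 : 1 - (d₁ : ℝ) / m ≤ 1 := by
    have : 0 ≤ (d₁ : ℝ) / m := by positivity
    linarith
  have hN : (0 : ℝ) < (BBG n m d₁ d₂).card := by exact_mod_cast hne.card_pos
  have hU := upper_tail hm hd₁ hd₂ hne hdm a ha Q hQ μ σ2 _ γ₀ hσ0 hμ hσ rfl hγ t ht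
  have hL := lower_tail hm hd₁ hd₂ hbal hne hdm Q (fun u v => (hQ u v).1) μ σ2 γ₀ hσ0 hμ hσ hγ t ht
  set p := 1 - (d₁ : ℝ) / m with hp
  have hx0 : 0 ≤ a * t / σ2 := by positivity
  have hh := hfun_lower (a * t / σ2) hx0
  have hh0 : 0 ≤ hfun (a * t / σ2) := le_trans (by positivity) hh
  constructor
  · refine hU.trans (Real.exp_le_exp.2 ?_)
    rw [hc]
    have : 0 ≤ p * (σ2 / a ^ 2) * hfun (a * t / σ2) := by positivity
    linarith
  · have b1 : Real.exp (-(p / 2 * (σ2 / a ^ 2) * hfun (a * t / σ2))) ≤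
        Real.exp (-c₀ * t ^ 2 / (2 * (σ2 + a * t / 3))) := by
      refine Real.exp_le_exp.2 ?_
      rw [neg_mul, neg_div]
      refine neg_le_neg ?_
      have h1 := mul_le_mul_of_nonneg_left hh (show 0 ≤ p / 2 * (σ2 / a ^ 2) by positivity)
      refine le_trans ?_ h1
      have e : p / 2 * (σ2 / a ^ 2) * ((a * t / σ2) ^ 2 / (2 + a * t / σ2))
          = p * t ^ 2 / (4 * σ2 + 2 * (a * t)) := by
        field_simp
        ring
      have e2 : c₀ * t ^ 2 / (2 * (σ2 + a * t / 3)) = p * t ^ 2 / (6 * σ2 + 2 * (a * t)) := by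
        rw [hc]
        field_simp
        ring
      rw [e, e2]
      refine div_le_div_of_nonneg_left (by positivity) (by positivity) (by linarith)
    have b2 : Real.exp (-(t ^ 2 / (6 * σ2))) ≤
        Real.exp (-c₀ * t ^ 2 / (2 * (σ2 + a * t / 3))) := by
      refine Real.exp_le_exp.2 ?_
      rw [neg_mul, neg_div]
      refine neg_le_neg ?_
      have e2 : c₀ * t ^ 2 / (2 * (σ2 + a * t / 3)) = p * t ^ 2 / (6 * σ2 + 2 * (a * t)) := by
        rw [hc]
        field_simp
        ring
      rw [e2]
      have hat : 0 ≤ a * t := by positivity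
      refine div_le_div₀ (by positivity) ?_ (by positivity) (by linarith)
      nlinarith [sq_nonneg t]
    have hcard : (((BBG n m d₁ d₂).filter fun X => γ₀ * μ + t ≤ |fQ Q X - μ|).card : ℝ) ≤
        (((BBG n m d₁ d₂).filter fun X => γ₀ * μ + t ≤ fQ Q X - μ).card : ℝ) +
        (((BBG n m d₁ d₂).filter fun X => γ₀ * μ + t ≤ -(fQ Q X - μ)).card : ℝ) := by
      have hsub : ((BBG n m d₁ d₂).filter fun X => γ₀ * μ + t ≤ |fQ Q X - μ|) ⊆
          ((BBG n m d₁ d₂).filter fun X => γ₀ * μ + t ≤ fQ Q X - μ) ∪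
          ((BBG n m d₁ d₂).filter fun X => γ₀ * μ + t ≤ -(fQ Q X - μ)) := by
        intro X hX
        rw [Finset.mem_filter] at hX
        rw [Finset.mem_union, Finset.mem_filter, Finset.mem_filter]
        rcases le_abs.1 hX.2 with h | h
        · exact Or.inl ⟨hX.1, h⟩
        · exact Or.inr ⟨hX.1, h⟩
      exact_mod_cast (Finset.card_le_card hsub).trans (Finset.card_union_le _ _)
    have h9 := div_le_div_of_nonneg_right hcard hN.le
    rw [add_div] at h9
    linarith
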